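/- Let s, β, g, w ∈ ℕ and let b ≥ βgs be a prime. The digital net P ⊂ [0,1)^s of the paper's construction satisfies κ(P) ≥ g + 1 and μ_β(P) ≥ max{0, β(gw − ⌊s(β−1)/2⌋)} + 1. -/

import Mathlib

/-!
Row `w l + o` of a Chen–Skriganov matrix is, in the monomial basis, the functional sending `f` to
its Hasse derivative of order `o` at the `l`-th node. Hence an element of the dual net is a
combination of such functionals vanishing on all polynomials of degree below `g w`, and Hermite
interpolation shows that the orders needed at the various nodes, counted with multiplicity, add up
to more than `g w`. A node contributes at most `w`, so more than `g` nodes carry a nonzero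
coefficient; and the contributions of the `g` nodes of one coordinate add up to at most the NRT
weight of that coordinate, so the total NRT weight exceeds `g w`.

Interlacing permutes the digits, which preserves the Hamming weight. The leading digits of the `β`
parts interlaced into one coordinate, of NRT weights `h_0, …, h_{β-1}`, end up at the distinct
positions `β h_i - (β - 1 - i)`, so the Dick metric is at least `β ∑ h_i - β (β - 1) / 2`.
-/

open scoped BigOperators

/-- The `i`-th digit (starting from `i = 0`) of the `b`-adic expansion of `k`. -/
def bdigit (b k i : ℕ) : ℕ := k / b ^ i % b

/-- The set of indices of nonzero `b`-adic digits of `k`. -/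
def bsupp (b k : ℕ) : Finset ℕ := (Finset.range (k + 1)).filter fun i => bdigit b k i ≠ 0

/-- The Hamming metric `κ(k)`: the number of nonzero `b`-adic digits of `k`. -/
def hamming (b k : ℕ) : ℕ := (bsupp b k).card

/-- The Dick metric `μ_α(k)`: the sum of the `min(v, α)` largest exponents-plus-one
`a_1 > a_2 > ⋯` of the nonzero `b`-adic digits of `k`. -/
def dick (b α k : ℕ) : ℕ := ((((bsupp b k).sort (· ≤ ·)).reverse.take α).map (· + 1)).sum

/-- Digitwise addition `k ⊕ l` modulo `b` of the `b`-adic digits. -/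
def dadd (b k l : ℕ) : ℕ :=
  ∑ i ∈ Finset.range (k + l + 1), (bdigit b k i + bdigit b l i) % b * b ^ i

/-- Digitwise subtraction `k ⊖ l` modulo `b` of the `b`-adic digits. -/
def dsub (b k l : ℕ) : ℕ :=
  ∑ i ∈ Finset.range (k + l + 1), (bdigit b k i + (b - bdigit b l i)) % b * b ^ i

/-- Hamming metric of a vector: sum over coordinates. -/
def hammingVec (b : ℕ) {s : ℕ} (k : Fin s → ℕ) : ℕ := ∑ j, hamming b (k j)

/-- Dick metric of a vector: sum over coordinates. -/
def dickVec (b α : ℕ) {s : ℕ} (k : Fin s → ℕ) : ℕ := ∑ j, dick b α (k j)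

/-- The column vector of the first `n` `b`-adic digits of `k`, as a vector over `F_b = ZMod b`. -/
def trv (b n : ℕ) (k : ℕ) : Fin n → ZMod b := fun i => (bdigit b k i.1 : ZMod b)

/-- The dual net `P⊥` of the digital net with generating matrices `C`. -/
def dualNet (b : ℕ) {s n m : ℕ} (C : Fin s → Matrix (Fin n) (Fin m) (ZMod b)) :
    Set (Fin s → ℕ) :=
  {k | (∀ j, k j < b ^ n) ∧ ∑ j, ((C j).transpose).mulVec (trv b n (k j)) = 0}

/-- The dual net `P∞⊥` of the digital net with generating matrices `C` (no upper bound
on the components of `k`). -/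
def dualNetInf (b : ℕ) {s n m : ℕ} (C : Fin s → Matrix (Fin n) (Fin m) (ZMod b)) :
    Set (Fin s → ℕ) :=
  {k | ∑ j, ((C j).transpose).mulVec (trv b n (k j)) = 0}

/-- The `h`-th point of the digital net generated by the matrices `C` over `ZMod b`:
its `j`-th coordinate is `∑_{i=1}^n ξ_i b^{-i}` with `(ξ_1,…,ξ_n)ᵀ = C_j · (η_0,…,η_{m-1})ᵀ`,
where `η` are the `b`-adic digits of `h`. -/
noncomputable def netPoint (b : ℕ) {s n m : ℕ} (C : Fin s → Matrix (Fin n) (Fin m) (ZMod b))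
    (h : ℕ) : Fin s → ℝ :=
  fun j => ∑ i : Fin n,
    (((C j).mulVec (fun v : Fin m => (bdigit b h v.1 : ZMod b)) i).val : ℝ) / (b : ℝ) ^ (i.1 + 1)

/-- Sum of the `α` largest elements of a finite set of (0-based) row indices, counted
1-based, i.e. each index `i` contributes `i + 1`. -/
def topSum (α : ℕ) (R : Finset ℕ) : ℕ := (((R.sort (· ≤ ·)).reverse.take α).map (· + 1)).sum

/-- The digital net with generating matrices `C_1,…,C_s ∈ F_b^{n×m}` is an order `α`
digital `(t,m,s)`-net: for every choice of rows `i_{j,v_j} < ⋯ < i_{j,1}` from each `C_j`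
such that the 1-based indices of the `min(α, v_j)` largest chosen rows of each matrix sum
to at most `αm - t`, the chosen rows are linearly independent over `F_b`. -/
def isOrderNet (b α t m : ℕ) {s n : ℕ} (C : Fin s → Matrix (Fin n) (Fin m) (ZMod b)) : Prop :=
  ∀ R : Fin s → Finset (Fin n),
    (∑ j, topSum α ((R j).image Fin.val)) ≤ α * m - t →
    LinearIndependent (ZMod b) fun p : Σ j : Fin s, {i : Fin n // i ∈ R j} => C p.1 p.2.1

/-- The minimum Dick metric `μ_α(P)` of the digital net with generating matrices `C`,
namely the minimum of `μ_α(k)` over nonzero elements `k` of the dual net. -/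
noncomputable def minDick (b α : ℕ) {s n m : ℕ}
    (C : Fin s → Matrix (Fin n) (Fin m) (ZMod b)) : ℕ :=
  sInf (dickVec b α '' {k | k ∈ dualNet b C ∧ k ≠ 0})

/-- The minimum Hamming metric `κ(P)` of the digital net with generating matrices `C`. -/
noncomputable def minHamming (b : ℕ) {s n m : ℕ}
    (C : Fin s → Matrix (Fin n) (Fin m) (ZMod b)) : ℕ :=
  sInf (hammingVec b '' {k | k ∈ dualNet b C ∧ k ≠ 0})

/-- The Chen–Skriganov generating matrix (for one coordinate `j`, with row parameters
`βr l = β_{j,l}`): the entry in (1-based) row `u = (l-1)w + i` and column `v` is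
`binom(v-1, i-1) · β_{j,l}^{v-i}` (which vanishes when `v < i` since the binomial
coefficient is `0`). Indices here are 0-based. -/
def csMatrix (b w n : ℕ) (βr : ℕ → ZMod b) : Matrix (Fin n) (Fin n) (ZMod b) :=
  Matrix.of fun u v =>
    (Nat.choose v.1 (u.1 % w) : ZMod b) * βr (u.1 / w) ^ (v.1 - u.1 % w)

/-- Dick's digit interlacing composition with interlacing factor `α` applied to the
generating matrices `C_1,…,C_{αs} ∈ F_b^{m×m}`: the resulting matrices
`D_1,…,D_s ∈ F_b^{αm×m}` are such that the (1-based) `(α(h-1)+i)`-th row of `D_j` is the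
`h`-th row of `C_{α(j-1)+i}`. -/
def interlace {R : Type*} (α s m : ℕ) (C : Fin (α * s) → Matrix (Fin m) (Fin m) R) :
    Fin s → Matrix (Fin (α * m)) (Fin m) R :=
  fun j => Matrix.of fun r v =>
    C ⟨α * j.1 + r.1 % α, by
        have hα : 0 < α := by
          rcases Nat.eq_zero_or_pos α with h | h
          · exact absurd r.2 (by simp [h])
          · exact h
        have h1 : α * (j.1 + 1) ≤ α * s := Nat.mul_le_mul_left α j.2
        have h2 : α * (j.1 + 1) = α * j.1 + α := by ring
        have h3 : r.1 % α < α := Nat.mod_lt _ hα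
        omega⟩
      ⟨r.1 / α, by
        have hα : 0 < α := by
          rcases Nat.eq_zero_or_pos α with h | h
          · exact absurd r.2 (by simp [h])
          · exact h
        exact Nat.div_lt_of_lt_mul r.2⟩
      v

section DigitVectors

variable {R : Type*} [Zero R] [DecidableEq R] {m n : ℕ}

/-- The positions of the nonzero entries of a digit vector. They are recorded as natural numbers,
so that they can be compared with `bsupp`. -/
def digitSupport (v : Fin n → R) : Finset ℕ :=
  ({i | v i ≠ 0} : Finset (Fin n)).map Fin.valEmbedding

/-- The NRT weight of a digit vector: the 1-based position of its last nonzero entry, or `0` for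
the zero vector. -/
def nrtNorm (v : Fin n → R) : ℕ := (digitSupport v).sup (· + 1)

lemma val_mem_digitSupport {v : Fin n → R} {i : Fin n} : i.1 ∈ digitSupport v ↔ v i ≠ 0 := by
  simp [digitSupport, Fin.val_inj]

lemma card_digitSupport (v : Fin n → R) : (digitSupport v).card = hammingNorm v :=
  Finset.card_map _

lemma nrtNorm_le_iff {v : Fin n → R} {h : ℕ} : nrtNorm v ≤ h ↔ ∀ i, v i ≠ 0 → i.1 < h := by
  simp [nrtNorm, digitSupport]

lemma lt_nrtNorm {v : Fin n → R} {i : Fin n} (hi : v i ≠ 0) : i.1 < nrtNorm v :=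
  nrtNorm_le_iff.mp le_rfl i hi

lemma exists_nrtNorm_eq {v : Fin n → R} (hv : v ≠ 0) :
    ∃ i, v i ≠ 0 ∧ nrtNorm v = i.1 + 1 := by
  obtain ⟨i₀, hi₀⟩ := Function.ne_iff.mp hv
  obtain ⟨r, hr, hmax⟩ := Finset.exists_mem_eq_sup (digitSupport v)
    ⟨i₀.1, val_mem_digitSupport.mpr hi₀⟩ (· + 1)
  obtain ⟨i, hi, rfl⟩ := Finset.mem_map.mp hr
  exact ⟨i, (Finset.mem_filter.mp hi).2, hmax⟩

lemma nrtNorm_zero : nrtNorm (0 : Fin n → R) = 0 := by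
  simp [nrtNorm, digitSupport]

lemma nrtNorm_le_mul_hammingNorm (v : Fin n → R) : nrtNorm v ≤ n * hammingNorm v := by
  rcases eq_or_ne v 0 with rfl | hv
  · simp [nrtNorm_zero]
  · calc nrtNorm v ≤ n := nrtNorm_le_iff.mpr fun i _ => i.2
      _ ≤ n * hammingNorm v := Nat.le_mul_of_pos_right n (hammingNorm_pos_iff.mpr hv)

lemma sum_nrtNorm_blocks_le_mul_hammingNorm (v : Fin (m * n) → R) :
    ∑ l, nrtNorm (fun o => v (finProdFinEquiv (l, o))) ≤ n * hammingNorm v :=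
  calc ∑ l, nrtNorm (fun o => v (finProdFinEquiv (l, o)))
      ≤ ∑ l, n * hammingNorm (fun o => v (finProdFinEquiv (l, o))) :=
        Finset.sum_le_sum fun _ _ => nrtNorm_le_mul_hammingNorm _
    _ = n * hammingNorm v := by
        simp only [hammingNorm, Finset.card_filter]
        rw [← Finset.mul_sum, ← finProdFinEquiv.sum_comp, Fintype.sum_prod_type]

lemma sum_range_min_sub_mul_le (n h m : ℕ) :
    ∑ l ∈ Finset.range m, min n (h - l * n) ≤ min h (m * n) := by
  induction m with
  | zero => simp
  | succ m ih =>
    rw [Finset.sum_range_succ, Nat.succ_mul]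
    omega

lemma sum_nrtNorm_blocks_le_nrtNorm (v : Fin (m * n) → R) :
    ∑ l, nrtNorm (fun o => v (finProdFinEquiv (l, o))) ≤ nrtNorm v := by
  have block_le : ∀ l : Fin m,
      nrtNorm (fun o => v (finProdFinEquiv (l, o))) ≤ min n (nrtNorm v - l * n) := by
    refine fun l => nrtNorm_le_iff.mpr fun o ho => lt_min o.2 ?_
    have hpos : o.1 + n * l.1 < nrtNorm v := lt_nrtNorm ho
    rw [mul_comm] at hpos
    omega
  calc ∑ l, nrtNorm (fun o => v (finProdFinEquiv (l, o)))
      ≤ ∑ l : Fin m, min n (nrtNorm v - l * n) := Finset.sum_le_sum fun l _ => block_le l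
    _ = ∑ l ∈ Finset.range m, min n (nrtNorm v - l * n) :=
        Fin.sum_univ_eq_sum_range (fun l => min n (nrtNorm v - l * n)) m
    _ ≤ nrtNorm v := (sum_range_min_sub_mul_le n _ m).trans (min_le_left _ _)

end DigitVectors

section HermiteInterpolation

open Polynomial

variable {R : Type*} [CommRing R]

lemma eval_hasseDeriv_eq_zero_of_pow_dvd {x : R} {n o : ℕ} {f : R[X]}
    (hf : (X - C x) ^ n ∣ f) (ho : o < n) : (hasseDeriv o f).eval x = 0 := by
  obtain ⟨q, rfl⟩ := hf
  rw [← taylor_coeff, taylor_mul, taylor_pow, map_sub, taylor_X, taylor_C, add_sub_cancel_right,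
    coeff_X_pow_mul', if_neg ho.not_ge]

lemma eval_hasseDeriv_X_sub_C_pow_mul (x : R) (n : ℕ) (q : R[X]) :
    (hasseDeriv n ((X - C x) ^ n * q)).eval x = q.eval x := by
  rw [← taylor_coeff, taylor_mul, taylor_pow, map_sub, taylor_X, taylor_C, add_sub_cancel_right,
    coeff_X_pow_mul', if_pos le_rfl, Nat.sub_self, taylor_coeff_zero]

lemma eval_hasseDeriv_eq_sum_fin {n : ℕ} {f : R[X]} (hf : f.natDegree < n) (o : ℕ) (x : R) :
    (hasseDeriv o f).eval x =
      ∑ v : Fin n, ((v.1.choose o : R) * x ^ (v.1 - o)) * f.coeff v := by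
  rw [hasseDeriv_apply, sum_over_range' _ (by simp) n hf, eval_finsetSum,
    ← Fin.sum_univ_eq_sum_range
      (fun v => eval x (monomial (v - o) ((v.choose o : R) * f.coeff v)))]
  refine Finset.sum_congr rfl fun v _ => ?_
  rw [eval_monomial]
  ring

variable [DecidableEq R] {τ : Type*} [Fintype τ] {w N : ℕ} {p : τ → R} {c : τ → Fin w → R}

lemma sum_mul_hasseDeriv_eq_single {t₀ : τ} {o₀ : Fin w} (htop : nrtNorm (c t₀) = o₀ + 1)
    {q : R[X]} (hq : ∀ t ≠ t₀, (X - C (p t)) ^ nrtNorm (c t) ∣ q) :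
    ∑ t, ∑ o : Fin w, c t o * (hasseDeriv o ((X - C (p t₀)) ^ o₀.1 * q)).eval (p t) =
      c t₀ o₀ * q.eval (p t₀) := by
  have hother : ∀ t ≠ t₀, ∑ o : Fin w,
      c t o * (hasseDeriv o ((X - C (p t₀)) ^ o₀.1 * q)).eval (p t) = 0 := by
    refine fun t ht => Finset.sum_eq_zero fun o _ => ?_
    by_cases hto : c t o = 0
    · rw [hto, zero_mul]
    rw [eval_hasseDeriv_eq_zero_of_pow_dvd ((hq t ht).mul_left _) (lt_nrtNorm hto), mul_zero]
  have hlower : ∀ o ≠ o₀,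
      c t₀ o * (hasseDeriv o ((X - C (p t₀)) ^ o₀.1 * q)).eval (p t₀) = 0 := by
    intro o ho
    by_cases hto : c t₀ o = 0
    · rw [hto, zero_mul]
    have hlt : o.1 < o₀.1 :=
      (Nat.le_of_lt_succ ((lt_nrtNorm hto).trans_eq htop)).lt_of_ne (Fin.val_ne_of_ne ho)
    rw [eval_hasseDeriv_eq_zero_of_pow_dvd (dvd_mul_right _ _) hlt, mul_zero]
  rw [Fintype.sum_eq_single t₀ hother, Fintype.sum_eq_single o₀ hlower,
    eval_hasseDeriv_X_sub_C_pow_mul]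

/-- The combination is tested on `(X - p t₀) ^ (m t₀ - 1) * ∏ t ≠ t₀, (X - p t) ^ m t`, where
`m t = nrtNorm (c t)` and `c t₀ ≠ 0`: of all functionals that occur, only the one of highest order
at `p t₀` does not kill it. -/
theorem lt_sum_nrtNorm_of_sum_hasseDeriv_eq_zero [IsDomain R] (hp : Function.Injective p)
    (hc : c ≠ 0)
    (hker : ∀ f : R[X], f.natDegree < N →
      ∑ t, ∑ o : Fin w, c t o * (hasseDeriv o f).eval (p t) = 0) :
    N < ∑ t, nrtNorm (c t) := by
  classical
  by_contra! hle
  obtain ⟨t₀, ht₀⟩ := Function.ne_iff.mp hc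
  obtain ⟨o₀, ho₀, htop⟩ := exists_nrtNorm_eq ht₀
  set q : R[X] := ∏ t ∈ Finset.univ.erase t₀, (X - C (p t)) ^ nrtNorm (c t) with hq
  have hq_monic : q.Monic := monic_prod_of_monic _ _ fun t _ => (monic_X_sub_C _).pow _
  have hq_degree : q.natDegree = ∑ t ∈ Finset.univ.erase t₀, nrtNorm (c t) := by
    rw [hq, natDegree_prod_of_monic _ _ fun t _ => (monic_X_sub_C _).pow _]
    simp only [natDegree_pow, natDegree_X_sub_C, mul_one]
  have hq_eval : q.eval (p t₀) ≠ 0 := by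
    simp only [hq, eval_prod, eval_pow, eval_sub, eval_X, eval_C, Finset.prod_ne_zero_iff]
    exact fun t ht => pow_ne_zero _ (sub_ne_zero.mpr (hp.ne (Finset.ne_of_mem_erase ht).symm))
  have hq_dvd : ∀ t ≠ t₀, (X - C (p t)) ^ nrtNorm (c t) ∣ q := fun t ht =>
    Finset.dvd_prod_of_mem _ (Finset.mem_erase.mpr ⟨ht, Finset.mem_univ t⟩)
  have hdegree : ((X - C (p t₀)) ^ o₀.1 * q).natDegree < N := by
    have hsplit := Finset.add_sum_erase Finset.univ (fun t => nrtNorm (c t)) (Finset.mem_univ t₀)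
    rw [((monic_X_sub_C _).pow _).natDegree_mul hq_monic, hq_degree, natDegree_pow,
      natDegree_X_sub_C]
    omega
  have hsum := hker _ hdegree
  rw [sum_mul_hasseDeriv_eq_single htop hq_dvd] at hsum
  exact mul_ne_zero ho₀ hq_eval hsum

end HermiteInterpolation

section ChenSkriganov

open Polynomial Matrix

lemma csMatrix_mulVec_coeff {b n : ℕ} (w : ℕ) (x : ℕ → ZMod b) {f : (ZMod b)[X]}
    (hf : f.natDegree < n) (u : Fin n) :
    (csMatrix b w n x *ᵥ fun v => f.coeff v) u =
      (hasseDeriv (u.1 % w) f).eval (x (u.1 / w)) := by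
  rw [eval_hasseDeriv_eq_sum_fin hf]
  rfl

variable {b : ℕ} [Fact b.Prime] {ι : Type*} [Fintype ι] {g w : ℕ} {x : ι → ℕ → ZMod b}
  {a : ι → Fin (g * w) → ZMod b}

theorem lt_sum_nrtNorm_blocks_of_sum_vecMul_csMatrix_eq_zero
    (hx : Function.Injective fun t : ι × Fin g => x t.1 t.2) (ha : a ≠ 0)
    (hker : ∑ j, a j ᵥ* csMatrix b w (g * w) (x j) = 0) :
    g * w < ∑ j, ∑ l, nrtNorm (fun o => a j (finProdFinEquiv (l, o))) := by
  rw [← Fintype.sum_prod_type' fun j l => nrtNorm (fun o => a j (finProdFinEquiv (l, o)))]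
  refine lt_sum_nrtNorm_of_sum_hasseDeriv_eq_zero
    (c := fun (t : ι × Fin g) o => a t.1 (finProdFinEquiv (t.2, o))) hx ?_ fun f hf => ?_
  · obtain ⟨j, hj⟩ := Function.ne_iff.mp ha
    obtain ⟨u, hu⟩ := Function.ne_iff.mp hj
    obtain ⟨⟨l, o⟩, rfl⟩ := finProdFinEquiv.surjective u
    exact fun hc => hu (congrFun (congrFun hc (j, l)) o)
  · have hrow : ∀ j l (o : Fin w),
        (csMatrix b w (g * w) (x j) *ᵥ fun v => f.coeff v) (finProdFinEquiv (l, o)) =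
          (hasseDeriv o f).eval (x j l) := by
      intro j l o
      have hw : 0 < w := o.pos
      rw [csMatrix_mulVec_coeff w (x j) hf]
      simp [finProdFinEquiv, Nat.add_mul_div_left _ _ hw, Nat.mod_eq_of_lt o.2,
        Nat.div_eq_of_lt o.2]
    calc ∑ t : ι × Fin g, ∑ o : Fin w,
          a t.1 (finProdFinEquiv (t.2, o)) * (hasseDeriv o f).eval (x t.1 t.2)
        = ∑ j, a j ⬝ᵥ (csMatrix b w (g * w) (x j) *ᵥ fun v => f.coeff v) := by
          simp only [Fintype.sum_prod_type, ← hrow, dotProduct, ← finProdFinEquiv.sum_comp]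
      _ = (∑ j, a j ᵥ* csMatrix b w (g * w) (x j)) ⬝ᵥ fun v => f.coeff v := by
          simp only [dotProduct_mulVec, sum_dotProduct]
      _ = 0 := by rw [hker, zero_dotProduct]

theorem lt_sum_nrtNorm_of_sum_vecMul_csMatrix_eq_zero
    (hx : Function.Injective fun t : ι × Fin g => x t.1 t.2) (ha : a ≠ 0)
    (hker : ∑ j, a j ᵥ* csMatrix b w (g * w) (x j) = 0) :
    g * w < ∑ j, nrtNorm (a j) :=
  (lt_sum_nrtNorm_blocks_of_sum_vecMul_csMatrix_eq_zero hx ha hker).trans_le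
    (Finset.sum_le_sum fun j _ => sum_nrtNorm_blocks_le_nrtNorm (a j))

theorem lt_sum_hammingNorm_of_sum_vecMul_csMatrix_eq_zero
    (hx : Function.Injective fun t : ι × Fin g => x t.1 t.2) (ha : a ≠ 0)
    (hker : ∑ j, a j ᵥ* csMatrix b w (g * w) (x j) = 0) :
    g < ∑ j, hammingNorm (a j) := by
  have hmul : g * w < (∑ j, hammingNorm (a j)) * w :=
    calc g * w < ∑ j, ∑ l, nrtNorm (fun o => a j (finProdFinEquiv (l, o))) :=
          lt_sum_nrtNorm_blocks_of_sum_vecMul_csMatrix_eq_zero hx ha hker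
      _ ≤ ∑ j, w * hammingNorm (a j) :=
          Finset.sum_le_sum fun j _ => sum_nrtNorm_blocks_le_mul_hammingNorm (a j)
      _ = (∑ j, hammingNorm (a j)) * w := by simp only [Finset.sum_mul, mul_comm w]
  exact Nat.lt_of_mul_lt_mul_right hmul

end ChenSkriganov

section Interlacing

open Matrix

/-- The position `β h + i` of the pair `(h, i)`. Both the rows of interlaced matrices and the
matrices themselves (the `i`-th part of coordinate `j` is the matrix `β j + i`) are numbered this
way. -/
def interlaceEquiv (β m : ℕ) : Fin m × Fin β ≃ Fin (β * m) :=
  finProdFinEquiv.trans (finCongr (mul_comm m β))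

lemma interlaceEquiv_val {β m : ℕ} (h : Fin m) (i : Fin β) :
    (interlaceEquiv β m (h, i)).1 = β * h + i :=
  Nat.add_comm _ _

/-- Digit deinterlacing: splits each of `s` digit vectors of length `β m` into `β` parts of length
`m`, transposing the action of `interlace` on generating matrices. -/
def deinterlace {R : Type*} {β s m : ℕ} (y : Fin s → Fin (β * m) → R) :
    Fin (β * s) → Fin m → R :=
  fun q h => y ((interlaceEquiv β s).symm q).1
    (interlaceEquiv β m (h, ((interlaceEquiv β s).symm q).2))

lemma deinterlace_interlaceEquiv {R : Type*} {β s m : ℕ} (y : Fin s → Fin (β * m) → R)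
    (j : Fin s) (i : Fin β) :
    deinterlace y (interlaceEquiv β s (j, i)) = fun h => y j (interlaceEquiv β m (h, i)) := by
  funext h
  simp only [deinterlace, Equiv.symm_apply_apply]

lemma interlace_interlaceEquiv {R : Type*} {β s m : ℕ}
    (C : Fin (β * s) → Matrix (Fin m) (Fin m) R) (j : Fin s) (i : Fin β) (h : Fin m) :
    interlace β s m C j (interlaceEquiv β m (h, i)) = C (interlaceEquiv β s (j, i)) h := by
  have hmatrix : β * j.1 + (interlaceEquiv β m (h, i)).1 % β = (interlaceEquiv β s (j, i)).1 := by
    rw [interlaceEquiv_val, interlaceEquiv_val, Nat.mul_add_mod, Nat.mod_eq_of_lt i.2]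
  have hrow : (interlaceEquiv β m (h, i)).1 / β = h.1 := by
    rw [interlaceEquiv_val, Nat.mul_add_div i.pos, Nat.div_eq_of_lt i.2, add_zero]
  funext v
  simp only [interlace, of_apply, hmatrix, hrow, Fin.eta]

lemma sum_sum_eq_of_interlaceEquiv {M : Type*} [AddCommMonoid M] {β s m : ℕ}
    {φ : Fin (β * s) → Fin m → M} {ψ : Fin s → Fin (β * m) → M}
    (h : ∀ j i r, φ (interlaceEquiv β s (j, i)) r = ψ j (interlaceEquiv β m (r, i))) :
    ∑ q, ∑ r, φ q r = ∑ j, ∑ r, ψ j r := by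
  simp only [← (interlaceEquiv β s).sum_comp, ← (interlaceEquiv β m).sum_comp,
    Fintype.sum_prod_type, h]
  exact Finset.sum_congr rfl fun j _ => Finset.sum_comm

lemma deinterlace_ne_zero {R : Type*} [Zero R] {β s m : ℕ} {y : Fin s → Fin (β * m) → R}
    (hy : y ≠ 0) : deinterlace y ≠ 0 := by
  obtain ⟨j, hj⟩ := Function.ne_iff.mp hy
  obtain ⟨r, hr⟩ := Function.ne_iff.mp hj
  obtain ⟨⟨h, i⟩, rfl⟩ := (interlaceEquiv β m).surjective r
  intro h0
  have hpart := congrFun (congrFun h0 (interlaceEquiv β s (j, i))) h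
  rw [deinterlace_interlaceEquiv] at hpart
  exact hr hpart

lemma sum_deinterlace_vecMul {R : Type*} [NonUnitalNonAssocSemiring R] {β s m : ℕ}
    (y : Fin s → Fin (β * m) → R) (C : Fin (β * s) → Matrix (Fin m) (Fin m) R) :
    ∑ q, deinterlace y q ᵥ* C q = ∑ j, y j ᵥ* interlace β s m C j := by
  funext v
  simp only [Finset.sum_apply, vecMul, dotProduct]
  refine sum_sum_eq_of_interlaceEquiv fun j i h => ?_
  rw [deinterlace_interlaceEquiv, interlace_interlaceEquiv]

lemma sum_hammingNorm_deinterlace {R : Type*} [Zero R] [DecidableEq R] {β s m : ℕ}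
    (y : Fin s → Fin (β * m) → R) :
    ∑ q, hammingNorm (deinterlace y q) = ∑ j, hammingNorm (y j) := by
  simp only [hammingNorm, Finset.card_filter]
  refine sum_sum_eq_of_interlaceEquiv fun j i h => ?_
  rw [deinterlace_interlaceEquiv]

end Interlacing

section DickMetric

lemma sum_map_le_sum_map_take {ι M : Type*} [Preorder ι] [AddCommMonoid M] [PartialOrder M]
    [IsOrderedAddMonoid M] [CanonicallyOrderedAdd M] {f : ι → M} (hf : Monotone f)
    {l L : List ι} (hL : L.Pairwise (· ≥ ·)) (hl : l.Sublist L) {α : ℕ} (hα : l.length ≤ α) :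
    (l.map f).sum ≤ ((L.take α).map f).sum := by
  induction L generalizing l α with
  | nil => simp [List.sublist_nil.mp hl]
  | cons a L ih =>
    obtain ⟨ha, hL⟩ := List.pairwise_cons.mp hL
    match l, α with
    | [], _ => simp
    | x :: l, α + 1 =>
      have hxa : x ≤ a := by
        rcases List.mem_cons.mp (hl.subset List.mem_cons_self) with rfl | hx
        exacts [le_rfl, ha x hx]
      simp only [List.take_succ_cons, List.map_cons, List.sum_cons]
      exact add_le_add (hf hxa) (ih hL hl.of_cons_cons (Nat.le_of_succ_le_succ hα))

lemma sum_le_topSum {α : ℕ} {S R : Finset ℕ} (hS : S ⊆ R) (hcard : S.card ≤ α) :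
    ∑ i ∈ S, (i + 1) ≤ topSum α R := by
  have hsub : (S.sort (· ≤ ·)).Sublist (R.sort (· ≤ ·)) :=
    List.sublist_of_subperm_of_sortedLE
      ((S.sort_nodup _).subperm fun i hi => by simpa using hS (by simpa using hi))
      S.sortedLT_sort.sortedLE R.sortedLT_sort.sortedLE
  calc ∑ i ∈ S, (i + 1) = ((S.sort (· ≤ ·)).reverse.map (· + 1)).sum := by
        rw [List.map_reverse, List.sum_reverse, ← List.sum_toFinset _ (S.sort_nodup _),
          Finset.sort_toFinset]
    _ ≤ topSum α R := sum_map_le_sum_map_take (fun _ _ h => Nat.succ_le_succ h)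
        (List.pairwise_reverse.mpr (R.pairwise_sort _)) hsub.reverse (by simpa using hcard)

lemma two_mul_sum_sub_one_sub (β : ℕ) : 2 * ∑ i : Fin β, (β - 1 - i.1) = β * (β - 1) := by
  rw [Fin.sum_univ_eq_sum_range (fun i => β - 1 - i), Finset.sum_range_reflect (fun i => i) β,
    mul_comm, Finset.sum_range_id_mul_two]

variable {R : Type*} [Zero R] [DecidableEq R] {β m : ℕ}

lemma exists_mem_digitSupport_of_part_ne_zero {y : Fin (β * m) → R} {i : Fin β}
    (hi : (fun h => y (interlaceEquiv β m (h, i))) ≠ 0) :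
    ∃ r ∈ digitSupport y, r % β = i ∧
      β * nrtNorm (fun h => y (interlaceEquiv β m (h, i))) = r + 1 + (β - 1 - i) := by
  obtain ⟨h, hh, hnrt⟩ := exists_nrtNorm_eq hi
  refine ⟨interlaceEquiv β m (h, i), val_mem_digitSupport.mpr hh, ?_, ?_⟩
  · rw [interlaceEquiv_val, Nat.mul_add_mod, Nat.mod_eq_of_lt i.2]
  · rw [hnrt, interlaceEquiv_val, Nat.mul_succ]
    omega

lemma two_mul_sum_nrtNorm_parts_le (y : Fin (β * m) → R) :
    2 * (β * ∑ i : Fin β, nrtNorm (fun h => y (interlaceEquiv β m (h, i)))) ≤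
      2 * topSum β (digitSupport y) + β * (β - 1) := by
  classical
  let part : Fin β → Fin m → R := fun i h => y (interlaceEquiv β m (h, i))
  change 2 * (β * ∑ i, nrtNorm (part i)) ≤ _
  set I : Finset (Fin β) := {i | part i ≠ 0} with hI
  have hlead : ∀ i, part i ≠ 0 → ∃ r ∈ digitSupport y, r % β = i ∧
      β * nrtNorm (part i) = r + 1 + (β - 1 - i) :=
    fun _ => exists_mem_digitSupport_of_part_ne_zero
  choose! r hr_mem hr_mod hr_nrt using hlead
  have hr_inj : Set.InjOn r I := fun i hi i' hi' h => Fin.ext <| by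
    rw [← hr_mod i (by simpa [hI] using hi), ← hr_mod i' (by simpa [hI] using hi'), h]
  have htop : ∑ i ∈ I, (r i + 1) ≤ topSum β (digitSupport y) := by
    rw [← Finset.sum_image hr_inj (f := (· + 1))]
    refine sum_le_topSum (Finset.image_subset_iff.mpr fun i hi => ?_) ?_
    · exact hr_mem i (by simpa [hI] using hi)
    · exact Finset.card_image_le.trans (card_finset_fin_le I)
  have hsum : β * ∑ i, nrtNorm (part i) ≤ ∑ i ∈ I, (r i + 1) + ∑ i : Fin β, (β - 1 - i.1) := by
    rw [Finset.mul_sum, hI, Finset.sum_filter, ← Finset.sum_add_distrib]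
    refine Finset.sum_le_sum fun i _ => ?_
    by_cases hi : part i = 0
    · simp [hi, nrtNorm_zero]
    · rw [if_pos hi, hr_nrt i hi]
  have := two_mul_sum_sub_one_sub β
  omega

lemma two_mul_sum_nrtNorm_deinterlace_le {s : ℕ} (y : Fin s → Fin (β * m) → R) :
    2 * (β * ∑ q, nrtNorm (deinterlace y q)) ≤
      2 * ∑ j, topSum β (digitSupport (y j)) + s * (β * (β - 1)) :=
  calc 2 * (β * ∑ q, nrtNorm (deinterlace y q))
      = ∑ j, 2 * (β * ∑ i : Fin β, nrtNorm (fun h => y j (interlaceEquiv β m (h, i)))) := by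
        simp only [← (interlaceEquiv β s).sum_comp, Fintype.sum_prod_type, ← Finset.mul_sum,
          deinterlace_interlaceEquiv]
    _ ≤ ∑ j, (2 * topSum β (digitSupport (y j)) + β * (β - 1)) :=
        Finset.sum_le_sum fun j _ => two_mul_sum_nrtNorm_parts_le (y j)
    _ = 2 * ∑ j, topSum β (digitSupport (y j)) + s * (β * (β - 1)) := by
        simp [Finset.sum_add_distrib, Finset.mul_sum]

end DickMetric

section Digits

variable {b n k : ℕ}

lemma mem_bsupp {i : ℕ} (hb : 1 < b) : i ∈ bsupp b k ↔ bdigit b k i ≠ 0 := by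
  rw [bsupp, Finset.mem_filter, Finset.mem_range, and_iff_right_iff_imp]
  contrapose!
  intro hki
  have hlt : k < b ^ i := (Nat.lt_of_succ_le hki).trans (Nat.lt_pow_self hb)
  rw [bdigit, Nat.div_eq_of_lt hlt, Nat.zero_mod]

lemma bdigit_log_ne_zero (hb : 1 < b) (hk : k ≠ 0) : bdigit b k (Nat.log b k) ≠ 0 := by
  have hlt : k / b ^ Nat.log b k < b :=
    Nat.div_lt_of_lt_mul (by simpa [pow_succ] using Nat.lt_pow_succ_log_self hb k)
  rw [bdigit, Nat.mod_eq_of_lt hlt]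
  exact (Nat.div_pos (Nat.pow_log_le_self b hk) (by positivity)).ne'

lemma trv_apply_eq_zero_iff (i : Fin n) : trv b n k i = 0 ↔ bdigit b k i = 0 := by
  rw [trv, ZMod.natCast_eq_zero_iff, Nat.dvd_iff_mod_eq_zero, bdigit, Nat.mod_mod]

lemma digitSupport_trv (hb : 1 < b) (hk : k < b ^ n) :
    digitSupport (trv b n k) = bsupp b k := by
  ext r
  rw [mem_bsupp hb]
  by_cases hr : r < n
  · exact (val_mem_digitSupport (i := ⟨r, hr⟩)).trans (trv_apply_eq_zero_iff _).not
  · have hlt : k < b ^ r := hk.trans_le (Nat.pow_le_pow_right (by omega) (not_lt.mp hr))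
    have hdigit : bdigit b k r = 0 := by rw [bdigit, Nat.div_eq_of_lt hlt, Nat.zero_mod]
    simp only [hdigit, ne_eq, not_true_eq_false, iff_false]
    intro hmem
    obtain ⟨i, -, rfl⟩ := Finset.mem_map.mp hmem
    exact hr i.2

lemma trv_ne_zero (hb : 1 < b) (hkn : k < b ^ n) (hk : k ≠ 0) : trv b n k ≠ 0 := by
  have hlog : Nat.log b k < n := Nat.log_lt_of_lt_pow hk hkn
  exact fun h => bdigit_log_ne_zero hb hk
    ((trv_apply_eq_zero_iff ⟨Nat.log b k, hlog⟩).mp (congrFun h _))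

lemma hamming_eq_hammingNorm_trv (hb : 1 < b) (hk : k < b ^ n) :
    hamming b k = hammingNorm (trv b n k) := by
  rw [hamming, ← digitSupport_trv hb hk, card_digitSupport]

lemma dick_eq_topSum_digitSupport_trv (hb : 1 < b) (hk : k < b ^ n) (α : ℕ) :
    dick b α k = topSum α (digitSupport (trv b n k)) := by
  rw [digitSupport_trv hb hk]
  rfl

lemma dick_pos {α : ℕ} (hb : 1 < b) (hα : 0 < α) (hk : k ≠ 0) : 0 < dick b α k := by
  have hmem : Nat.log b k ∈ bsupp b k := (mem_bsupp hb).mpr (bdigit_log_ne_zero hb hk)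
  have hle : ∑ i ∈ {Nat.log b k}, (i + 1) ≤ dick b α k :=
    sum_le_topSum (Finset.singleton_subset_iff.mpr hmem) (by rwa [Finset.card_singleton])
  rw [Finset.sum_singleton] at hle
  exact (Nat.succ_pos _).trans_le hle

lemma dickVec_pos {s α : ℕ} {k : Fin s → ℕ} (hb : 1 < b) (hα : 0 < α) (hk : k ≠ 0) :
    0 < dickVec b α k := by
  obtain ⟨j, hj⟩ := Function.ne_iff.mp hk
  exact Finset.sum_pos' (fun _ _ => Nat.zero_le _) ⟨j, Finset.mem_univ j, dick_pos hb hα hj⟩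

end Digits

section InterlacedDualNet

open Matrix

variable {b s β m : ℕ} {k : Fin s → ℕ}

lemma sum_deinterlace_trv_vecMul_eq_zero {C : Fin (β * s) → Matrix (Fin m) (Fin m) (ZMod b)}
    (hk : k ∈ dualNet b (interlace β s m C)) :
    ∑ q, deinterlace (fun j => trv b (β * m) (k j)) q ᵥ* C q = 0 := by
  rw [sum_deinterlace_vecMul]
  simpa only [mulVec_transpose] using hk.2

lemma deinterlace_trv_ne_zero (hb : 1 < b) (hlt : ∀ j, k j < b ^ (β * m)) (hk : k ≠ 0) :
    deinterlace (fun j => trv b (β * m) (k j)) ≠ 0 := by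
  obtain ⟨j, hj⟩ := Function.ne_iff.mp hk
  exact deinterlace_ne_zero fun h => trv_ne_zero hb (hlt j) hj (congrFun h j)

lemma hammingVec_eq_sum_hammingNorm_deinterlace (hb : 1 < b)
    (hlt : ∀ j, k j < b ^ (β * m)) :
    hammingVec b k = ∑ q, hammingNorm (deinterlace (fun j => trv b (β * m) (k j)) q) := by
  rw [sum_hammingNorm_deinterlace]
  exact Finset.sum_congr rfl fun j _ => hamming_eq_hammingNorm_trv hb (hlt j)

lemma two_mul_sum_nrtNorm_deinterlace_le_dickVec (hb : 1 < b)
    (hlt : ∀ j, k j < b ^ (β * m)) :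
    2 * (β * ∑ q, nrtNorm (deinterlace (fun j => trv b (β * m) (k j)) q)) ≤
      2 * dickVec b β k + s * (β * (β - 1)) := by
  simp only [dickVec, dick_eq_topSum_digitSupport_trv hb (hlt _)]
  exact two_mul_sum_nrtNorm_deinterlace_le _

end InterlacedDualNet

lemma mul_sub_half_lt {β N M D s : ℕ} (hβ : 0 < β) (hNM : N < M)
    (hMD : 2 * (β * M) ≤ 2 * D + s * (β * (β - 1))) :
    (β : ℤ) * ((N : ℤ) - ((s * (β - 1) / 2 : ℕ) : ℤ)) < D := by
  have hM : β * (N + 1) ≤ β * M := Nat.mul_le_mul_left β hNM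
  have hround : s * (β * (β - 1)) ≤ β * (2 * (s * (β - 1) / 2) + 1) := by
    rw [mul_left_comm]
    exact Nat.mul_le_mul_left β (by omega)
  generalize s * (β - 1) / 2 = q at hround ⊢
  have hD : 2 * (β * (N + 1)) ≤ 2 * D + β * (2 * q + 1) := by omega
  zify at hD hβ
  linarith

/-- For `s, β, g, w ∈ ℕ` and a prime `b ≥ βgs`, the digital net
`P ⊂ [0,1)^s` of the paper's construction (digit interlacing with factor `β` applied to
the Chen–Skriganov net in dimension `βs`) satisfies `κ(P) ≥ g + 1` and
`μ_β(P) ≥ max{0, β(gw - ⌊s(β-1)/2⌋)} + 1`. -/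
theorem construction_metrics
    (b s β g w : ℕ) (hb : b.Prime) (hs : 0 < s) (hβ : 0 < β) (hg : 0 < g) (hw : 0 < w)
    (hbs : β * g * s ≤ b) (βe : ℕ → ℕ → ZMod b)
    (hdist : ∀ j l j' l', j < β * s → l < g → j' < β * s → l' < g →
      βe j l = βe j' l' → j = j' ∧ l = l') :
    ∀ k ∈ dualNet b (interlace β s (g * w) fun j => csMatrix b w (g * w) (βe j.1)),
      k ≠ 0 →
      g + 1 ≤ hammingVec b k ∧
      max 0 ((β : ℤ) * (((g * w : ℕ) : ℤ) - ((s * (β - 1) / 2 : ℕ) : ℤ))) + 1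
        ≤ (dickVec b β k : ℤ) := by
  intro k hk hk0
  have : Fact b.Prime := ⟨hb⟩
  have hnodes : Function.Injective fun t : Fin (β * s) × Fin g => βe t.1 t.2 :=
    fun t t' h =>
      let ⟨hj, hl⟩ := hdist _ _ _ _ t.1.2 t.2.2 t'.1.2 t'.2.2 h
      Prod.ext (Fin.ext hj) (Fin.ext hl)
  have hker := sum_deinterlace_trv_vecMul_eq_zero hk
  have hne := deinterlace_trv_ne_zero hb.one_lt hk.1 hk0
  have hnrt := lt_sum_nrtNorm_of_sum_vecMul_csMatrix_eq_zero hnodes hne hker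
  have hdick := two_mul_sum_nrtNorm_deinterlace_le_dickVec hb.one_lt hk.1
  refine ⟨?_, Int.add_one_le_of_lt (max_lt ?_ (mul_sub_half_lt hβ hnrt hdick))⟩
  · rw [hammingVec_eq_sum_hammingNorm_deinterlace hb.one_lt hk.1]
    exact lt_sum_hammingNorm_of_sum_vecMul_csMatrix_eq_zero hnodes hne hker
  · exact_mod_cast dickVec_pos hb.one_lt hβ hk0
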